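/- Let V(x) = x² and Ω(R) = (−R, R) for R > 0, so that λ_m^0(h) = (2m+1)h. For each integer m ≥ 0 there exist constants C, δ > 0 such that for all h, R > 0 with h·R⁻² < δ: |λ_m^{Ω(R)}(h) − (2m+1)h − T(h,R)| ≤ C·(h·R⁻²)·T(h,R), where T(h,R) = (2^{2+m}/(m!·√π))·h^{1/2−m}·R^{2m+1}·e^{−R²/h}. -/

import Mathlib

open MeasureTheory Set Filter

/-- `u` is an eigenfunction of the Dirichlet realization of `P(h) = h²D_x² + V`
on `(a,b)` with eigenvalue `lam`. -/
def IsEigenfunctionPD (V : ℝ → ℝ) (a b h lam : ℝ) (u : ℝ → ℝ) : Prop :=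
  (∃ x ∈ Set.Icc a b, u x ≠ 0) ∧ ContDiffOn ℝ 2 u (Set.Icc a b) ∧
    u a = 0 ∧ u b = 0 ∧
    ∀ x ∈ Set.Ioo a b, -(h ^ 2) * deriv (deriv u) x + V x * u x = lam * u x

/-- `lam` is an eigenvalue of the Dirichlet realization of `P(h)` on `(a,b)`. -/
def IsEigPD (V : ℝ → ℝ) (a b h lam : ℝ) : Prop :=
  ∃ u : ℝ → ℝ, IsEigenfunctionPD V a b h lam u

/-- `lam` is the `m`-th element of `S` in increasing order (counting from `m = 0`). -/
def IsNthEig (S : Set ℝ) (m : ℕ) (lam : ℝ) : Prop :=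
  lam ∈ S ∧ {x ∈ S | x < lam}.Finite ∧ {x ∈ S | x < lam}.ncard = m


/-- rising factorial -/
noncomputable def hoPoch (a : ℝ) (k : ℕ) : ℝ := ∏ i ∈ Finset.range k, (a + i)

lemma hoPoch_zero (a : ℝ) : hoPoch a 0 = 1 := by simp [hoPoch]

lemma hoPoch_succ (a : ℝ) (k : ℕ) : hoPoch a (k+1) = hoPoch a k * (a + k) := by
  simp [hoPoch, Finset.prod_range_succ]

lemma hoPoch_succ' (a : ℝ) (k : ℕ) : hoPoch a (k+1) = a * hoPoch (a+1) k := by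
  simp only [hoPoch, Finset.prod_range_succ']
  rw [mul_comm]
  congr 1
  · simp
  · apply Finset.prod_congr rfl
    intro i _
    push_cast; ring

noncomputable def hoTerm (a : ℝ) (s : ℕ) (x : ℝ) (k : ℕ) : ℝ :=
  4 ^ k * hoPoch a k * x ^ (2*k+s) / (Nat.factorial (2*k+s) : ℝ)

noncomputable def hoPhi (a : ℝ) (s : ℕ) (x : ℝ) : ℝ := ∑' k, hoTerm a s x k

lemma hoTerm_succ (a : ℝ) (s : ℕ) (x : ℝ) (k : ℕ) :
    hoTerm a s x (k+1) = hoTerm a s x k * (4 * (a + k) * x^2 / ((2*k+s+1)*(2*k+s+2))) := by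
  unfold hoTerm
  have h : 2*(k+1)+s = (2*k+s+1)+1 := by ring
  rw [h, Nat.factorial_succ, Nat.factorial_succ, hoPoch_succ]
  have := Nat.factorial_pos (2*k+s)
  push_cast
  field_simp
  ring

lemma hoTerm_summable (a : ℝ) (s : ℕ) (x : ℝ) : Summable (fun k => ‖hoTerm a s x k‖) := by
  set B := |a| * |x|^2 * 4 + 4*|x|^2 with hB
  obtain ⟨N, hN⟩ := exists_nat_gt (2 * B)
  refine summable_norm_iff.2 (summable_of_ratio_norm_eventually_le (r := 1/2) (by norm_num) ?_)
  filter_upwards [eventually_ge_atTop N] with k hk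
  rw [hoTerm_succ, norm_mul, mul_comm]
  refine mul_le_mul_of_nonneg_right ?_ (norm_nonneg _)
  have hk' : (N:ℝ) ≤ k := by exact_mod_cast hk
  have h1 : |a + k| ≤ |a| + k := by
    refine (abs_add_le _ _).trans ?_
    simp
  have hs : (0:ℝ) ≤ s := Nat.cast_nonneg s
  have hk0 : (0:ℝ) ≤ k := Nat.cast_nonneg k
  rw [Real.norm_eq_abs, abs_div, abs_mul, abs_mul, abs_of_pos (by norm_num : (0:ℝ) < 4), abs_of_pos (by positivity : (0:ℝ) < (2*k+s+1)*(2*k+s+2)), div_le_iff₀ (by positivity), abs_pow]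
  have h2 : 4 * |a + k| * |x|^2 ≤ 4 * (|a| + k) * |x|^2 := by gcongr
  have h3 : 4 * (|a| + k) * |x|^2 ≤ B * (k+1) := by
    rw [hB]; nlinarith [mul_nonneg (abs_nonneg a) (sq_nonneg |x|), sq_nonneg |x|, mul_nonneg (mul_nonneg (abs_nonneg a) (sq_nonneg |x|)) hk0]
  have h4 : B * (k+1) ≤ 1/2 * k * (k+1) := by
    gcongr; linarith
  nlinarith [mul_nonneg hs hk0, mul_nonneg hs hs]

lemma hoTerm_summable' (a : ℝ) (s : ℕ) (x : ℝ) : Summable (hoTerm a s x) :=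
  (hoTerm_summable a s x).of_norm

lemma hoTerm_hasDerivAt (a : ℝ) (s : ℕ) (x : ℝ) (k : ℕ) :
    HasDerivAt (fun y => hoTerm a (s+1) y k) (hoTerm a s x k) x := by
  unfold hoTerm
  have h := ((hasDerivAt_pow (2*k+(s+1)) x).const_mul (4 ^ k * hoPoch a k)).div_const
    (Nat.factorial (2*k+(s+1)) : ℝ)
  refine h.congr_deriv ?_
  have e : 2*k+(s+1) = (2*k+s)+1 := by ring
  rw [e, Nat.factorial_succ]
  have := Nat.factorial_pos (2*k+s)
  simp only [Nat.add_sub_cancel]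
  push_cast
  field_simp

lemma hoPhi_hasDerivAt (a : ℝ) (s : ℕ) (x : ℝ) :
    HasDerivAt (hoPhi a (s+1)) (hoPhi a s x) x := by
  unfold hoPhi
  have hx : x ∈ Metric.ball (0:ℝ) (|x|+1) := by simp
  refine hasDerivAt_tsum_of_isPreconnected (u := fun k => ‖hoTerm a s (|x|+1) k‖)
    (hoTerm_summable a s _) Metric.isOpen_ball (convex_ball _ _).isPreconnected
    (fun k y _ => hoTerm_hasDerivAt a s y k) ?_ hx (hoTerm_summable' a (s+1) x) hx
  intro k y hy
  have hy' : |y| ≤ |x|+1 := by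
    have := hy; simp at this; exact this.le
  unfold hoTerm
  rw [norm_div, norm_div, norm_mul, norm_mul _ ((|x|+1)^(2*k+s)), norm_pow y, norm_pow (|x|+1)]
  gcongr
  rw [Real.norm_eq_abs, Real.norm_eq_abs]
  exact hy'.trans (le_abs_self _)

lemma hoPhi_rec (a : ℝ) (s : ℕ) (x : ℝ) :
    hoPhi a s x = x^s / (Nat.factorial s : ℝ) + 4 * a * hoPhi (a+1) (s+2) x := by
  unfold hoPhi
  rw [(hoTerm_summable' a s x).tsum_eq_zero_add, ← tsum_mul_left]
  congr 1
  · simp [hoTerm, hoPoch_zero]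
  · congr 1; ext k
    unfold hoTerm
    rw [hoPoch_succ', show 2*(k+1)+s = 2*k+(s+2) by ring]
    ring

lemma hoPhi_id1 (a x : ℝ) :
    4 * a * hoPhi (a+1) 1 x = (4*a-2) * hoPhi a 1 x + 2 * x * hoPhi a 0 x := by
  unfold hoPhi
  rw [← tsum_mul_left, ← tsum_mul_left, ← tsum_mul_left, ← Summable.tsum_add]
  · congr 1; ext k
    have h : a * hoPoch (a+1) k = hoPoch a k * (a+k) := by rw [← hoPoch_succ', hoPoch_succ]
    unfold hoTerm
    rw [show 4 * a * (4^k * hoPoch (a+1) k * x^(2*k+1) / (Nat.factorial (2*k+1) : ℝ)) = 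
      4 * (4^k * (a * hoPoch (a+1) k) * x^(2*k+1) / (Nat.factorial (2*k+1) : ℝ)) by ring, h, 
      Nat.factorial_succ]
    have := Nat.factorial_pos (2*k)
    push_cast
    simp only [Nat.add_zero]
    field_simp
    ring
  · exact (hoTerm_summable' a 1 x).mul_left _
  · exact (hoTerm_summable' a 0 x).mul_left _

lemma hoPhi_zero_hasDerivAt (a x : ℝ) :
    HasDerivAt (hoPhi a 0) (4 * a * hoPhi (a+1) 1 x) x := by
  have h : hoPhi a 0 = fun x => 1 + 4 * a * hoPhi (a+1) 2 x := by
    ext y; rw [hoPhi_rec]; simp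
  rw [h]
  exact ((hoPhi_hasDerivAt (a+1) 1 x).const_mul (4*a)).const_add 1

lemma hoPhi_id0 (a x : ℝ) :
    4 * a * hoPhi (a+1) 0 x = 4*a * hoPhi a 0 x + 2 * x * (4 * a * hoPhi (a+1) 1 x) := by
  have h1 := (hoPhi_hasDerivAt (a+1) 0 x).const_mul (4*a)
  have h2 := ((hoPhi_hasDerivAt a 0 x).const_mul (4*a-2)).add
    (((hasDerivAt_id x).const_mul 2).mul (hoPhi_zero_hasDerivAt a x))
  have h3 : (fun y => 4 * a * hoPhi (a+1) 1 y) = ((fun y => (4*a-2) * hoPhi a 1 y) + (fun y => 2 * id y) * hoPhi a 0) := by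
    ext y; simp [hoPhi_id1]
  rw [zero_add] at h1 h2
  rw [h3] at h1
  have := h1.unique h2
  rw [this]; simp; ring

lemma hoPhi_one_zero (x : ℝ) : hoPhi 1 0 x = 1 + 2 * x * hoPhi 1 1 x := by
  rw [hoPhi_rec]
  simp only [pow_zero, Nat.factorial_zero, Nat.cast_one, div_one]
  congr 1
  unfold hoPhi
  rw [← tsum_mul_left, ← tsum_mul_left]
  congr 1; ext k
  have h : (1:ℝ) * hoPoch (1+1) k = hoPoch 1 k * (1+k) := by rw [← hoPoch_succ', hoPoch_succ]
  rw [one_mul] at h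
  unfold hoTerm
  rw [h, show 2*k+(0+2) = (2*k+1)+1 by ring, Nat.factorial_succ]
  have := Nat.factorial_pos (2*k+1)
  push_cast
  field_simp
  ring

lemma hoPoch_pos {a : ℝ} (ha : 0 < a) (k : ℕ) : 0 < hoPoch a k :=
  Finset.prod_pos fun i _ => by positivity

lemma hoPoch_mono {a b : ℝ} (ha : 0 ≤ a) (hab : a ≤ b) (k : ℕ) : hoPoch a k ≤ hoPoch b k :=
  Finset.prod_le_prod (fun i _ => by positivity) fun i _ => by linarith

lemma hoPhi_mono {a b x : ℝ} (ha : 0 ≤ a) (hab : a ≤ b) (hx : 0 ≤ x) (s : ℕ) :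
    hoPhi a s x ≤ hoPhi b s x := by
  refine Summable.tsum_le_tsum (fun k => ?_) (hoTerm_summable' a s x) (hoTerm_summable' b s x)
  unfold hoTerm
  have := hoPoch_mono ha hab k
  gcongr

lemma hoPhi_pos {a x : ℝ} (ha : 0 ≤ a) (hx : 0 < x) (s : ℕ) : 0 < hoPhi a s x := by
  refine lt_of_lt_of_le ?_ (hoPhi_mono le_rfl ha hx.le s)
  rw [hoPhi_rec]
  simp
  positivity

lemma hoPoch_half (k : ℕ) : hoPoch 1 k ≤ hoPoch (1/2) k * (2*k+1) := by
  induction k with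
  | zero => simp [hoPoch_zero]
  | succ k ih =>
    rw [hoPoch_succ, hoPoch_succ]
    have h := hoPoch_pos (a := 1/2) (by norm_num) k
    push_cast
    have hk0 : (0:ℝ) ≤ k := Nat.cast_nonneg k
    nlinarith [mul_nonneg h.le hk0]

lemma hoPhi_half {x : ℝ} (hx : 0 < x) (s : ℕ) : hoPhi 1 (s+1) x ≤ x * hoPhi (1/2) s x := by
  unfold hoPhi
  rw [← tsum_mul_left]
  refine Summable.tsum_le_tsum (fun k => ?_) (hoTerm_summable' 1 (s+1) x)
    ((hoTerm_summable' (1/2) s x).mul_left x)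
  unfold hoTerm
  rw [show 2*k+(s+1) = (2*k+s)+1 by ring, Nat.factorial_succ]
  have hf : (0:ℝ) < (Nat.factorial (2*k+s) : ℝ) := by exact_mod_cast Nat.factorial_pos _
  have h := hoPoch_half k
  have h0 := hoPoch_pos (a := 1/2) (by norm_num) k
  have h2 : hoPoch 1 k ≤ hoPoch (1/2) k * (2*k+s+1) := h.trans (by gcongr; simp)
  push_cast
  calc 4^k * hoPoch 1 k * x^(2*k+s+1) / ((2*k+s+1) * (Nat.factorial (2*k+s) : ℝ))
      ≤ 4^k * (hoPoch (1/2) k * (2*k+s+1)) * x^(2*k+s+1) / ((2*k+s+1) * (Nat.factorial (2*k+s) : ℝ)) := by gcongr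
    _ = _ := by field_simp; ring

lemma hoPoch_lip {a b : ℝ} (ha : 0 ≤ a) (hab : a ≤ b) (hb : b ≤ 1) (k : ℕ) :
    hoPoch b k - hoPoch a k ≤ (b-a) * k * hoPoch 1 k := by
  induction k with
  | zero => simp [hoPoch_zero]
  | succ k ih =>
    rw [hoPoch_succ, hoPoch_succ, hoPoch_succ]
    have h1 := hoPoch_pos (a := 1) (by norm_num) k
    have h2 := hoPoch_mono (ha.trans hab) hb k
    have hk0 : (0:ℝ) ≤ k := Nat.cast_nonneg k
    have h3 : (hoPoch b k - hoPoch a k) * (a+k) ≤ ((b-a) * k * hoPoch 1 k) * (1+k) := by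
      have : 0 ≤ hoPoch b k - hoPoch a k := sub_nonneg.2 (hoPoch_mono ha hab k)
      gcongr
      linarith
    have h4 : hoPoch b k * (b-a) ≤ hoPoch 1 k * (b-a) := by
      have : 0 ≤ b - a := by linarith
      gcongr
    push_cast
    have h5 : 0 ≤ (b-a) * hoPoch 1 k * k := mul_nonneg (mul_nonneg (by linarith) h1.le) hk0
    nlinarith

lemma hoPhi_lip {a b x : ℝ} (ha : 0 ≤ a) (hab : a ≤ b) (hb : b ≤ 1) (hx : 0 < x) (s : ℕ) :
    hoPhi b (s+1) x - hoPhi a (s+1) x ≤ (b-a) * (x * hoPhi 1 s x) := by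
  unfold hoPhi
  rw [← tsum_mul_left, ← tsum_mul_left,
    ← (hoTerm_summable' b (s+1) x).tsum_sub (hoTerm_summable' a (s+1) x)]
  refine Summable.tsum_le_tsum (fun k => ?_)
    ((hoTerm_summable' b (s+1) x).sub (hoTerm_summable' a (s+1) x))
    (((hoTerm_summable' 1 s x).mul_left x).mul_left _)
  unfold hoTerm
  rw [show 2*k+(s+1) = (2*k+s)+1 by ring, Nat.factorial_succ]
  have hf : (0:ℝ) < (Nat.factorial (2*k+s) : ℝ) := by exact_mod_cast Nat.factorial_pos _
  have h := hoPoch_lip ha hab hb k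
  have h1 := hoPoch_pos (a := 1) (by norm_num) k
  have hk0 : (0:ℝ) ≤ k := Nat.cast_nonneg k
  have hs0 : (0:ℝ) ≤ s := Nat.cast_nonneg s
  have h2 : hoPoch b k - hoPoch a k ≤ (b-a) * (2*k+s+1) * hoPoch 1 k := h.trans (by
    have : 0 ≤ b - a := by linarith
    gcongr
    linarith)
  push_cast
  calc _ = 4^k * (hoPoch b k - hoPoch a k) * x^(2*k+s+1) / ((2*k+s+1) * (Nat.factorial (2*k+s) : ℝ)) := by ring
    _ ≤ 4^k * ((b-a) * (2*k+s+1) * hoPoch 1 k) * x^(2*k+s+1) / ((2*k+s+1) * (Nat.factorial (2*k+s) : ℝ)) := by gcongr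
    _ = _ := by field_simp; ring

lemma ho_exp_grow (K : ℝ) (p : ℕ) : ∀ᶠ x : ℝ in atTop, K * x^p ≤ Real.exp (x^2) := by
  have h := (Real.tendsto_pow_mul_exp_neg_atTop_nhds_zero p)
  have h2 : ∀ᶠ x : ℝ in atTop, x^p * Real.exp (-x) < 1/(|K|+1) :=
    h.eventually (gt_mem_nhds (by positivity))
  filter_upwards [h2, eventually_ge_atTop 1] with x hx h1
  have h3 : Real.exp x ≤ Real.exp (x^2) := Real.exp_le_exp.2 (by nlinarith)
  refine le_trans ?_ h3
  rw [Real.exp_neg, ← div_eq_mul_inv, div_lt_div_iff₀ (by positivity) (by positivity)] at hx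
  have h4 : K * x^p ≤ (|K|+1) * x^p := by
    gcongr
    linarith [le_abs_self K]
  linarith

lemma ho_deriv_aux (q : ℕ) {x : ℝ} (hx : 0 < x) :
    HasDerivAt (fun y : ℝ => Real.exp (y^2) / y^(q+1))
      (2 * (Real.exp (x^2) / x^q) - (q+1) * (Real.exp (x^2) / x^(q+2))) x := by
  have h1 : HasDerivAt (fun y : ℝ => Real.exp (y^2)) (Real.exp (x^2) * (2*x)) x := by
    have := (hasDerivAt_pow 2 x).exp
    simpa using this
  have h2 := hasDerivAt_pow (q+1) x
  refine (h1.div h2 (by positivity)).congr_deriv ?_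
  simp only [Nat.add_sub_cancel]
  push_cast
  field_simp
  ring

lemma ho_asym_step (F f : ℝ → ℝ) (hF : ∀ x, HasDerivAt F (f x) x) (A : ℝ) (q : ℕ)
    (C : ℝ) (hf : ∀ᶠ x in atTop, |f x - A * (Real.exp (x^2) / x^q)| ≤ C * (Real.exp (x^2) / x^(q+2))) :
    ∃ C' : ℝ, ∀ᶠ x in atTop, |F x - A/2 * (Real.exp (x^2) / x^(q+1))| ≤
      C' * (Real.exp (x^2) / x^(q+3)) := by
  set D : ℝ → ℝ := fun x => F x - A/2 * (Real.exp (x^2) / x^(q+1)) with hD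
  set B : ℝ := |C| + |A| * (q+1) / 2 with hB
  have hB0 : 0 ≤ B := by positivity
  obtain ⟨X0, hX0⟩ := eventually_atTop.1 hf
  set X : ℝ := max X0 (q+3) with hX
  have hXq : (q:ℝ)+3 ≤ X := le_max_right _ _
  have hq0 : (0:ℝ) ≤ q := Nat.cast_nonneg q
  have hX1 : 1 ≤ X := by linarith
  have hDd : ∀ x, 0 < x → HasDerivAt D (f x - A/2 * (2 * (Real.exp (x^2) / x^q) - (q+1) * (Real.exp (x^2) / x^(q+2)))) x :=
    fun x hx => (hF x).sub ((ho_deriv_aux q hx).const_mul _)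
  have hDb : ∀ x, X ≤ x → |f x - A/2 * (2 * (Real.exp (x^2) / x^q) - (q+1) * (Real.exp (x^2) / x^(q+2)))| ≤ B * (Real.exp (x^2) / x^(q+2)) := by
    intro x hx
    have hx0 : 0 < x := by linarith
    have h1 := hX0 x ((le_max_left _ _).trans hx)
    have e : f x - A/2 * (2 * (Real.exp (x^2) / x^q) - (q+1) * (Real.exp (x^2) / x^(q+2))) =
      (f x - A * (Real.exp (x^2) / x^q)) + A * (q+1)/2 * (Real.exp (x^2) / x^(q+2)) := by ring
    rw [e]
    refine (abs_add_le _ _).trans ?_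
    have hp : 0 < Real.exp (x^2) / x^(q+2) := by positivity
    rw [abs_mul, abs_of_pos hp, hB, add_mul]
    have : |A * (q+1)/2| = |A| * (q+1)/2 := by
      rw [abs_div, abs_mul, abs_of_pos (by positivity : (0:ℝ) < q+1), abs_of_pos (by norm_num : (0:ℝ) < 2)]
    rw [this]
    have : C * (Real.exp (x^2) / x^(q+2)) ≤ |C| * (Real.exp (x^2) / x^(q+2)) := by
      gcongr; exact le_abs_self C
    linarith
  have hKd : ∀ x, 0 < x → HasDerivAt (fun y => B * (Real.exp (y^2) / y^(q+3))) (B * (2 * (Real.exp (x^2) / x^(q+2)) - ((q+2 : ℕ)+1) * (Real.exp (x^2) / x^(q+4)))) x :=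
    fun x hx => (ho_deriv_aux (q+2) hx).const_mul B
  have hKb : ∀ x, X ≤ x → B * (Real.exp (x^2) / x^(q+2)) ≤ B * (2 * (Real.exp (x^2) / x^(q+2)) - ((q+2 : ℕ)+1) * (Real.exp (x^2) / x^(q+4))) := by
    intro x hx
    have hx0 : 0 < x := by linarith
    gcongr
    have : ((q+2 : ℕ)+1) * (Real.exp (x^2) / x^(q+4)) ≤ x^2 * (Real.exp (x^2) / x^(q+4)) := by
      gcongr
      push_cast
      nlinarith
    have e : x^2 * (Real.exp (x^2) / x^(q+4)) = Real.exp (x^2) / x^(q+2) := by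
      field_simp
      ring
    linarith
  have hm : ∀ σ : ℝ, |σ| = 1 → MonotoneOn (fun x => B * (Real.exp (x^2) / x^(q+3)) + σ * D x) (Ici X) := by
    intro σ hσ
    have hd : ∀ x ∈ Ici X, HasDerivAt (fun x => B * (Real.exp (x^2) / x^(q+3)) + σ * D x) _ x :=
      fun x hx => (hKd x (by have : X ≤ x := hx
                             linarith)).add ((hDd x (by have : X ≤ x := hx
                                                        linarith)).const_mul σ)
    refine monotoneOn_of_deriv_nonneg (convex_Ici X)
      (fun x hx => (hd x hx).continuousAt.continuousWithinAt)
      (fun x hx => (hd x (interior_subset hx)).differentiableAt.differentiableWithinAt) ?_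
    intro x hx
    have hx' := interior_subset hx
    rw [(hd x hx').deriv]
    have h1 := hKb x hx'
    have h2 := hDb x hx'
    have h3 : |σ * (f x - A/2 * (2 * (Real.exp (x^2) / x^q) - (q+1) * (Real.exp (x^2) / x^(q+2))))| ≤ B * (Real.exp (x^2) / x^(q+2)) := by
      rw [abs_mul, hσ, one_mul]; exact h2
    linarith [(abs_le.1 h3).1]
  refine ⟨B + |D X|, ?_⟩
  filter_upwards [eventually_ge_atTop X, ho_exp_grow 1 (q+3)] with x hx hg
  have hx0 : 0 < x := by linarith
  have m1 := hm 1 (by simp) (mem_Ici.2 le_rfl) (mem_Ici.2 hx) hx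
  have m2 := hm (-1) (by simp) (mem_Ici.2 le_rfl) (mem_Ici.2 hx) hx
  simp only at m1 m2
  have hp : 0 ≤ B * (Real.exp (X^2) / X^(q+3)) := by positivity
  have h1 : 1 ≤ Real.exp (x^2) / x^(q+3) := by
    rw [le_div_iff₀ (by positivity)]; exact hg
  have h2 : |D X| ≤ |D X| * (Real.exp (x^2) / x^(q+3)) := le_mul_of_one_le_right (abs_nonneg _) h1
  have h3 := abs_le.1 (le_refl |D X|)
  rw [abs_le]
  constructor
  · have : F x - A/2 * (Real.exp (x^2) / x^(q+1)) = D x := rfl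
    rw [this]
    linarith
  · have : F x - A/2 * (Real.exp (x^2) / x^(q+1)) = D x := rfl
    rw [this]
    linarith

lemma hoPhi_at_zero (a : ℝ) (s : ℕ) : hoPhi a (s+1) 0 = 0 := by
  unfold hoPhi hoTerm
  simp

lemma hoPhi_gauss (x : ℝ) : Real.exp (-x^2) * hoPhi 1 1 x = ∫ t in (0:ℝ)..x, Real.exp (-t^2) := by
  have hd : ∀ x, HasDerivAt (fun x => Real.exp (-x^2) * hoPhi 1 1 x) (Real.exp (-x^2)) x := by
    intro x
    have h1 : HasDerivAt (fun y : ℝ => Real.exp (-y^2)) (Real.exp (-x^2) * (-(2*x))) x := by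
      have := ((hasDerivAt_pow 2 x).neg).exp
      simpa using this
    refine (h1.mul (hoPhi_hasDerivAt 1 0 x)).congr_deriv ?_
    rw [hoPhi_one_zero]
    ring
  rw [intervalIntegral.integral_eq_sub_of_hasDerivAt (fun y _ => hd y)]
  · have := hoPhi_at_zero 1 0
    rw [zero_add] at this
    simp [this]
  · apply Continuous.intervalIntegrable
    fun_prop

lemma hoPhi_asym_base : ∃ C : ℝ, ∀ᶠ x in atTop,
    |hoPhi 1 1 x - Real.sqrt Real.pi / 2 * (Real.exp (x^2) / x^0)| ≤ C * (Real.exp (x^2) / x^2) := by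
  have hgauss : IntegrableOn (fun t : ℝ => Real.exp (-t^2)) (Ioi 0) := by
    have := (integrable_exp_neg_mul_sq (b := 1) one_pos).integrableOn (s := Ioi 0)
    simpa using this
  have hlim : Tendsto (fun x : ℝ => ∫ t in (0:ℝ)..x, Real.exp (-t^2)) atTop (nhds (Real.sqrt Real.pi / 2)) := by
    have h := intervalIntegral_tendsto_integral_Ioi 0 hgauss tendsto_id
    have h2 : ∫ t in Ioi (0:ℝ), Real.exp (-t^2) = Real.sqrt Real.pi / 2 := by
      have := integral_gaussian_Ioi 1
      simpa using this
    rw [h2] at h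
    exact h
  have hd : ∀ x, HasDerivAt (fun x : ℝ => ∫ t in (0:ℝ)..x, Real.exp (-t^2)) (Real.exp (-x^2)) x := by
    intro x
    apply intervalIntegral.integral_hasDerivAt_right
    · apply Continuous.intervalIntegrable
      fun_prop
    · exact (Continuous.stronglyMeasurable (by fun_prop)).stronglyMeasurableAtFilter
    · exact Continuous.continuousAt (by fun_prop)
  set g : ℝ → ℝ := fun x : ℝ => ∫ t in (0:ℝ)..x, Real.exp (-t^2) with hg
  have hmono : Monotone g := monotone_of_deriv_nonneg (fun x => (hd x).differentiableAt)
    (fun x => by rw [(hd x).deriv]; positivity)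
  have hle : ∀ x, g x ≤ Real.sqrt Real.pi / 2 := fun x => hmono.ge_of_tendsto hlim x
  obtain ⟨X0, hX0⟩ := eventually_atTop.1 (ho_exp_grow 1 3)
  set X := max X0 1 with hX
  have hanti : AntitoneOn (fun x => g x + 1/x^2) (Ici X) := by
    have hdd : ∀ x ∈ Ici X, HasDerivAt (fun x => g x + 1/x^2) (Real.exp (-x^2) + (-2/x^3)) x := by
      intro x hx
      have hx1 : 0 < x := lt_of_lt_of_le one_pos ((le_max_right _ _).trans hx)
      refine (hd x).add ?_
      have := (hasDerivAt_pow 2 x).inv (by positivity)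
      simp only [one_div]
      refine this.congr_deriv ?_
      field_simp
      norm_num
      ring
    refine antitoneOn_of_deriv_nonpos (convex_Ici X)
      (fun x hx => (hdd x hx).continuousAt.continuousWithinAt)
      (fun x hx => (hdd x (interior_subset hx)).differentiableAt.differentiableWithinAt) ?_
    intro x hx
    have hx' := interior_subset hx
    have hx1 : 0 < x := lt_of_lt_of_le one_pos ((le_max_right _ _).trans hx')
    rw [(hdd x hx').deriv]
    have := hX0 x ((le_max_left _ _).trans hx')
    have h2 : Real.exp (-x^2) ≤ 1/x^3 := by
      rw [Real.exp_neg, one_div]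
      gcongr
      linarith
    have h3 : 0 < 1/x^3 := by positivity
    have h4 : -2/x^3 = -2 * (1/x^3) := by ring
    rw [h4]; linarith
  refine ⟨1, ?_⟩
  filter_upwards [eventually_ge_atTop X] with x hx
  have hx1 : 0 < x := lt_of_lt_of_le one_pos ((le_max_right _ _).trans hx)
  have hge : Real.sqrt Real.pi / 2 ≤ g x + 1/x^2 := by
    have hl2 : Tendsto (fun y => g y + 1/y^2) atTop (nhds (Real.sqrt Real.pi / 2 + 0)) := by
      refine hlim.add ?_
      have := tendsto_pow_neg_atTop (𝕜 := ℝ) (n := 2) (by norm_num)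
      simpa [zpow_neg] using this
    rw [add_zero] at hl2
    refine le_of_tendsto hl2 ?_
    filter_upwards [eventually_ge_atTop x] with y hy
    exact hanti hx (mem_Ici.2 (le_trans hx hy)) hy
  have e : hoPhi 1 1 x = Real.exp (x^2) * g x := by
    rw [hg]; simp only
    rw [← hoPhi_gauss, ← mul_assoc, ← Real.exp_add]; simp
  rw [e]
  have e2 : Real.exp (x^2) * g x - Real.sqrt Real.pi / 2 * (Real.exp (x^2)/x^0) = Real.exp (x^2) * (g x - Real.sqrt Real.pi / 2) := by
    simp; ring
  rw [e2, abs_mul, abs_of_pos (Real.exp_pos _)]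
  have h5 : |g x - Real.sqrt Real.pi / 2| ≤ 1/x^2 := by
    rw [abs_le]; constructor <;> linarith [hle x, show 0 < 1/x^2 by positivity]
  calc _ ≤ Real.exp (x^2) * (1/x^2) := by gcongr
    _ = _ := by ring

lemma hoPhi_asym (t : ℕ) : ∃ C : ℝ, ∀ᶠ x in atTop,
    |hoPhi 1 (t+1) x - Real.sqrt Real.pi / 2^(t+1) * (Real.exp (x^2) / x^t)| ≤ C * (Real.exp (x^2) / x^(t+2)) := by
  induction t with
  | zero => simpa using hoPhi_asym_base
  | succ t ih =>
    obtain ⟨C, hC⟩ := ih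
    obtain ⟨C', h⟩ := ho_asym_step (hoPhi 1 (t+1+1)) (hoPhi 1 (t+1)) (fun x => hoPhi_hasDerivAt 1 (t+1) x) _ t C hC
    refine ⟨C', ?_⟩
    filter_upwards [h] with x hx
    convert hx using 4
    rw [pow_succ 2 (t+1)]; field_simp

set_option maxHeartbeats 1600000 in
lemma ho_abs (p0 g0 C c : ℝ) (hp0 : 0 < p0) (hg0 : 0 < g0) (hC : 0 < C) (hc : 0 < c) :
    ∃ w0 C' : ℝ, 0 < w0 ∧ 0 < C' ∧ ∀ w δ : ℝ, 0 < w → w < w0 → 0 < δ → δ ≤ w^4 →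
    ∀ p g : ℝ → ℝ,
    (∀ ε ∈ Icc (-1/2 : ℝ) (1/2), |p ε - p0| ≤ C * w) →
    (∀ ε ∈ Icc (-1/2 : ℝ) (1/2), ∀ ε' ∈ Icc (-1/2 : ℝ) (1/2), |p ε - p ε'| ≤ C * |ε - ε'|) →
    |g 0 - g0| ≤ C * w →
    (∀ ε ∈ Icc (-1/2 : ℝ) (1/2), c * w ≤ g ε) →
    (∀ ε₁ ε₂ : ℝ, -1/2 ≤ ε₁ → ε₁ ≤ ε₂ → ε₂ ≤ 0 → 0 ≤ g ε₂ - g ε₁ ∧ g ε₂ - g ε₁ ≤ (ε₂ - ε₁) * (C / w)) →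
    ∃ e : ℝ, 0 < e ∧ e < 1/4 ∧ (∀ ε ∈ Icc (-1/2 : ℝ) (1/2), δ * p ε + ε * g ε = 0 ↔ ε = -e) ∧
      |e - δ * (p0 / g0)| ≤ C' * (w * δ) := by
  set K := (p0 + C) / c with hK
  have hK0 : 0 < K := by positivity
  set D := C + K * C with hD
  have hD0 : 0 < D := by positivity
  refine ⟨min 1 (min (p0/(2*C)) (min (1/(4*K)) (min (g0/(2*D)) (c/D)))),
    (2*(p0+C)/g0 * D + C)/g0, by positivity, by positivity, ?_⟩
  intro w δ hw hww hδ hδw p g hp hpl hg hgl hgm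
  simp only [lt_min_iff] at hww
  obtain ⟨hw1, hw2, hw3, hw4, hw5⟩ := hww
  rw [lt_div_iff₀ (by positivity)] at hw2 hw3 hw4 hw5
  have hw2' : w^2 ≤ w := by nlinarith
  have hw3' : w^3 ≤ w^2 := by nlinarith [sq_nonneg w]
  have hw4' : w^4 ≤ w^3 := by nlinarith [pow_pos hw 3]
  have hppos : ∀ ε ∈ Icc (-1/2 : ℝ) (1/2), p0/2 ≤ p ε ∧ p ε ≤ p0 + C := by
    intro ε hε
    have := abs_le.1 (hp ε hε)
    constructor <;> nlinarith
  have hgpos : ∀ ε ∈ Icc (-1/2 : ℝ) (1/2), 0 < g ε := fun ε hε => lt_of_lt_of_le (by positivity) (hgl ε hε)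
  have hKc : K * c = p0 + C := by rw [hK]; field_simp
  -- zeros are small and negative
  have hz : ∀ ε ∈ Icc (-1/2 : ℝ) (1/2), δ * p ε + ε * g ε = 0 → ε < 0 ∧ -ε * w ≤ K * δ := by
    intro ε hε h
    have h1 := hppos ε hε
    have h2 := hgpos ε hε
    have h3 : 0 < δ * p ε := mul_pos hδ (by linarith)
    have hneg : ε < 0 := by
      by_contra hcon
      push Not at hcon
      have := mul_nonneg hcon h2.le
      linarith
    refine ⟨hneg, ?_⟩
    have h4 : -ε * (c * w) ≤ -ε * g ε := mul_le_mul_of_nonneg_left (hgl ε hε) (by linarith)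
    have h5 : δ * p ε ≤ δ * (K * c) := by rw [hKc]; gcongr; exact h1.2
    have h6 : c * (-ε * w) ≤ c * (K * δ) := by linarith
    exact le_of_mul_le_mul_left h6 hc
  have hKw : K * δ ≤ K * w^4 := by gcongr
  have hz2 : ∀ ε ∈ Icc (-1/2 : ℝ) (1/2), δ * p ε + ε * g ε = 0 → -ε ≤ K * w^3 := by
    intro ε hε h
    have h1 := (hz ε hε h).2
    have h2 : w * (-ε) ≤ w * (K * w^3) := by linarith [show w * (K * w^3) = K * w^4 by ring]
    exact le_of_mul_le_mul_left h2 hw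
  have hKw3 : K * w^3 < 1/4 := by nlinarith
  -- existence
  have hex : ∃ ε ∈ Icc (-1/2 : ℝ) 0, δ * p ε + ε * g ε = 0 := by
    have hsub : Icc (-1/2 : ℝ) 0 ⊆ Icc (-1/2 : ℝ) (1/2) := Icc_subset_Icc_right (by norm_num)
    have hpc : ContinuousOn p (Icc (-1/2 : ℝ) 0) := by
      refine (LipschitzOnWith.of_dist_le_mul (K := ⟨C, hC.le⟩) ?_).continuousOn
      intro x hx y hy
      exact hpl x (hsub hx) y (hsub hy)
    have hgc : ContinuousOn g (Icc (-1/2 : ℝ) 0) := by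
      refine (LipschitzOnWith.of_dist_le_mul (K := ⟨C/w, by positivity⟩) ?_).continuousOn
      intro x hx y hy
      rw [Real.dist_eq, Real.dist_eq]
      change _ ≤ C/w * _
      rcases le_total x y with hxy | hxy
      · have := hgm x y hx.1 hxy hy.2
        rw [abs_sub_comm, abs_of_nonneg this.1, abs_sub_comm, abs_of_nonneg (by linarith : 0 ≤ y - x)]
        linarith
      · have := hgm y x hy.1 hxy hx.2
        rw [abs_of_nonneg this.1, abs_of_nonneg (by linarith : 0 ≤ x - y)]
        linarith
    have hFc : ContinuousOn (fun ε => δ * p ε + ε * g ε) (Icc (-1/2 : ℝ) 0) :=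
      (continuousOn_const.mul hpc).add (continuousOn_id.mul hgc)
    have hiv := intermediate_value_Icc (by norm_num : (-1/2:ℝ) ≤ 0) hFc
    have h0 : (0:ℝ) ∈ Icc (δ * p (-1/2) + (-1/2) * g (-1/2)) (δ * p 0 + 0 * g 0) := by
      have hmem : (-1/2 : ℝ) ∈ Icc (-1/2 : ℝ) (1/2) := by constructor <;> norm_num
      have hmem0 : (0 : ℝ) ∈ Icc (-1/2 : ℝ) (1/2) := by constructor <;> norm_num
      constructor
      · have h1 := hgl _ hmem
        have h2 := (hppos _ hmem).2
        have h3 : δ * p (-1/2) ≤ δ * (K * c) := by rw [hKc]; gcongr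
        have h4 : δ * (K * c) ≤ (K * w^3) * (c * w) := by
          nlinarith
        have h5 : (K * w^3) * (c * w) ≤ 1/4 * (c * w) := by gcongr
        nlinarith [mul_pos hc hw]
      · have := mul_pos hδ (lt_of_lt_of_le (by positivity) (hppos _ hmem0).1)
        linarith
    obtain ⟨ε, hε, h⟩ := hiv h0
    exact ⟨ε, hε, h⟩
  obtain ⟨ε0, hε0, hF0⟩ := hex
  have hε0' : ε0 ∈ Icc (-1/2 : ℝ) (1/2) := ⟨hε0.1, hε0.2.trans (by norm_num)⟩
  have hneg := (hz ε0 hε0' hF0).1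
  -- uniqueness
  have huniq : ∀ ε₁ ∈ Icc (-1/2 : ℝ) (1/2), ∀ ε₂ ∈ Icc (-1/2 : ℝ) (1/2), ε₁ < ε₂ →
      δ * p ε₁ + ε₁ * g ε₁ = 0 → δ * p ε₂ + ε₂ * g ε₂ = 0 → False := by
    intro ε₁ h1 ε₂ h2 hlt hz1 hz2'
    have hn2 := hz ε₂ h2 hz2'
    have hpd := hpl ε₂ h2 ε₁ h1
    have hgd := hgm ε₁ ε₂ h1.1 hlt.le hn2.1.le
    have hg1 := hgl ε₁ h1
    have hd : 0 < ε₂ - ε₁ := by linarith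
    rw [abs_of_pos hd] at hpd
    have e : (ε₂ - ε₁) * g ε₁ = - (δ * (p ε₂ - p ε₁)) + (-ε₂) * (g ε₂ - g ε₁) := by linear_combination hz2' - hz1
    have b1 : - (δ * (p ε₂ - p ε₁)) ≤ δ * (C * (ε₂ - ε₁)) := by
      have := (abs_le.1 hpd).1
      nlinarith
    have b2 : (-ε₂) * (g ε₂ - g ε₁) ≤ (K * w^3) * ((ε₂ - ε₁) * (C / w)) := by
      have := hz2 ε₂ h2 hz2'
      gcongr
      · exact hgd.1
      · exact hgd.2
    have b3 : (K * w^3) * ((ε₂ - ε₁) * (C / w)) = (ε₂ - ε₁) * (K * C * w^2) := by field_simp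
    have b4 : (ε₂ - ε₁) * (c * w) ≤ (ε₂ - ε₁) * g ε₁ := by gcongr
    have b5 : (ε₂ - ε₁) * (c * w) ≤ (ε₂ - ε₁) * (δ * C + K * C * w^2) := by
      have : (ε₂ - ε₁) * (δ * C + K * C * w^2) = δ * (C * (ε₂ - ε₁)) + (ε₂ - ε₁) * (K * C * w^2) := by ring
      linarith
    have b6 : c * w ≤ δ * C + K * C * w^2 := le_of_mul_le_mul_left b5 hd
    have b7 : δ * C ≤ w^2 * C := by gcongr; linarith
    have b8 : c * w ≤ w * (w * D) := by
      have : w * (w * D) = w^2 * C + K * C * w^2 := by rw [hD]; ring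
      linarith
    have b9 : w * (w * D) < w * c := by gcongr
    linarith
  refine ⟨-ε0, by linarith, by linarith [hz2 ε0 hε0' hF0], ?_, ?_⟩
  · intro ε hε
    rw [neg_neg]
    constructor
    · intro h
      rcases lt_trichotomy ε ε0 with hlt | heq | hgt
      · exact (huniq ε hε ε0 hε0' hlt h hF0).elim
      · exact heq
      · exact (huniq ε0 hε0' ε hε hgt hF0 h).elim
    · rintro rfl; exact hF0
  · have hgd := hgm ε0 0 hε0.1 hneg.le le_rfl
    have hgg : |g ε0 - g0| ≤ D * w := by
      have h1 : g 0 - g ε0 ≤ K * C * w := by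
        have : (0 - ε0) * (C/w) ≤ (K * w^3) * (C/w) := by
          have := hz2 ε0 hε0' hF0
          gcongr
          linarith
        have e : (K * w^3) * (C/w) = K * C * w^2 := by field_simp
        have : K * C * w^2 ≤ K * C * w := by gcongr
        linarith
      have := abs_le.1 hg
      rw [abs_le, hD]
      have : 0 ≤ K * C * w := by positivity
      constructor <;> nlinarith [hgd.1]
    have hghalf : g0/2 ≤ g ε0 := by
      have := (abs_le.1 hgg).1
      nlinarith
    have he : -ε0 ≤ 2 * (p0 + C)/g0 * δ := by
      have h1 : -ε0 * (g0/2) ≤ -ε0 * g ε0 := mul_le_mul_of_nonneg_left hghalf (by linarith)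
      have h2 : δ * p ε0 ≤ δ * (p0+C) := by gcongr; exact (hppos _ hε0').2
      rw [div_mul_eq_mul_div, le_div_iff₀ hg0]
      linarith
    have e : (-ε0 - δ * (p0/g0)) * g0 = (-ε0) * (g0 - g ε0) + δ * (p ε0 - p0) := by
      field_simp
      linear_combination -hF0
    have h3 : |(-ε0 - δ * (p0/g0)) * g0| ≤ (2 * (p0 + C)/g0 * δ) * (D * w) + δ * (C * w) := by
      rw [e]
      refine (abs_add_le _ _).trans ?_
      rw [abs_mul, abs_mul, abs_of_pos hδ, abs_of_pos (by linarith : 0 < -ε0), abs_sub_comm g0]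
      have := hp ε0 hε0'
      gcongr
    rw [abs_mul, abs_of_pos hg0, ← le_div_iff₀ hg0] at h3
    refine h3.trans (le_of_eq ?_)
    field_simp

/-- polynomial part decomposition -/
lemma ho_decomp (n : ℕ) : ∀ s : ℕ, ∃ (κ : ℝ → ℝ) (p : ℝ → ℝ → ℝ) (K : ℝ), 0 < K ∧
    (∀ ε ∈ Icc (-1/2 : ℝ) (1/2), κ ε ≠ 0) ∧
    (∃ B, ∀ ε ∈ Icc (-1/2 : ℝ) (1/2), ∀ ε' ∈ Icc (-1/2 : ℝ) (1/2), |(κ ε)⁻¹| ≤ B ∧ |(κ ε)⁻¹ - (κ ε')⁻¹| ≤ B * |ε - ε'|) ∧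
    (∀ ε, κ ε = ∏ i ∈ Finset.range n, (ε - (i+1))) ∧
    (∀ ε ∈ Icc (-1/2 : ℝ) (1/2), ∀ x, hoPhi (-n + ε) s x = κ ε * (p ε x + ε * 4^(n+1) * hoPhi (1+ε) (s+2*n+2) x)) ∧
    (∀ ε ∈ Icc (-1/2 : ℝ) (1/2), ∀ x : ℝ, 1 ≤ x → |p ε x - 4^n * x^(s+2*n) / (Nat.factorial (s+2*n) : ℝ)| ≤ K * (x^(s+2*n)/x^2)) ∧
    (∀ ε ∈ Icc (-1/2 : ℝ) (1/2), ∀ ε' ∈ Icc (-1/2 : ℝ) (1/2), ∀ x : ℝ, 1 ≤ x → |p ε x - p ε' x| ≤ K * x^(s+2*n) * |ε - ε'|) := by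
  induction n with
  | zero =>
    intro s
    refine ⟨fun _ => 1, fun _ x => x^s / (Nat.factorial s : ℝ), 1, one_pos, by simp, ⟨1, ?_⟩, by simp, ?_, ?_, ?_⟩
    · intro ε _ ε' _; simp
    · intro ε _ x
      rw [hoPhi_rec]
      simp only [Nat.cast_zero, neg_zero, zero_add, pow_one, mul_zero, add_zero]
      rw [add_comm ε 1]; ring
    · intro ε _ x hx
      simp
      positivity
    · intro ε _ ε' _ x hx
      simp
      positivity
  | succ n ih =>
    intro s
    obtain ⟨κ, p, K, hK, hκ, ⟨B, hB⟩, hκe, hdec, hb, hl⟩ := ih (s+2)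
    have hκ1 : ∀ ε ∈ Icc (-1/2 : ℝ) (1/2), 1/2 ≤ (n+1) - ε := by
      intro ε hε
      have : (0:ℝ) ≤ n := Nat.cast_nonneg n
      linarith [hε.2]
    have hκ2 : ∀ ε ∈ Icc (-1/2 : ℝ) (1/2), κ ε * (ε - (n+1)) ≠ 0 := by
      intro ε hε
      have := hκ1 ε hε
      exact mul_ne_zero (hκ ε hε) (by linarith)
    have hBB : ∀ ε ∈ Icc (-1/2 : ℝ) (1/2), ∀ ε' ∈ Icc (-1/2 : ℝ) (1/2), |(κ ε * (ε - (n+1)))⁻¹| ≤ 6 * B ∧ |(κ ε * (ε - (n+1)))⁻¹ - (κ ε' * (ε' - (n+1)))⁻¹| ≤ 6 * B * |ε - ε'| := by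
      intro ε hε ε' hε'
      obtain ⟨h1, h2⟩ := hB ε hε ε' hε'
      obtain ⟨h1', _⟩ := hB ε' hε' ε' hε'
      have k1 := hκ1 ε hε
      have k2 := hκ1 ε' hε'
      have hB0 : 0 ≤ B := (abs_nonneg _).trans h1
      have i1 : |(ε - (n+1))⁻¹| ≤ 2 := by
        rw [abs_inv, abs_sub_comm, abs_of_pos (by linarith : 0 < (n+1) - ε), inv_le_comm₀ (by linarith) (by norm_num)]
        linarith
      have i2 : |(ε - (n+1))⁻¹ - (ε' - (n+1))⁻¹| ≤ 4 * |ε - ε'| := by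
        have i1' : |(ε' - (n+1))⁻¹| ≤ 2 := by
          rw [abs_inv, abs_sub_comm, abs_of_pos (by linarith : 0 < (n+1) - ε'), inv_le_comm₀ (by linarith) (by norm_num)]
          linarith
        have e : (ε - (n+1))⁻¹ - (ε' - (n+1))⁻¹ = (ε - (n+1))⁻¹ * (ε' - (n+1))⁻¹ * (ε' - ε) := by
          have : ε - (n+1) ≠ 0 := by linarith
          have : ε' - (n+1) ≠ 0 := by linarith
          field_simp
          ring
        rw [e, abs_mul, abs_mul, abs_sub_comm ε' ε]
        have : |(ε - (n+1))⁻¹| * |(ε' - (n+1))⁻¹| ≤ 2 * 2 := by gcongr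
        nlinarith [abs_nonneg (ε - ε')]
      constructor
      · rw [mul_inv, abs_mul]
        calc _ ≤ B * 2 := by gcongr
          _ ≤ _ := by linarith
      · have e : (κ ε * (ε - (n+1)))⁻¹ - (κ ε' * (ε' - (n+1)))⁻¹ = ((κ ε)⁻¹ - (κ ε')⁻¹) * (ε - (n+1))⁻¹ + (κ ε')⁻¹ * ((ε - (n+1))⁻¹ - (ε' - (n+1))⁻¹) := by
          rw [mul_inv, mul_inv]; ring
        rw [e]
        refine (abs_add_le _ _).trans ?_
        rw [abs_mul, abs_mul]
        calc _ ≤ (B * |ε - ε'|) * 2 + B * (4 * |ε - ε'|) := by gcongr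
          _ = _ := by ring
    have hB0 : 0 ≤ B := (abs_nonneg _).trans (hB 0 (by constructor <;> norm_num) 0 (by constructor <;> norm_num)).1
    have hpow : ∀ x : ℝ, 1 ≤ x → x^s / (Nat.factorial s : ℝ) ≤ x^(s+2*(n+1)) / x^2 := by
      intro x hx
      have h1 : x^s / (Nat.factorial s : ℝ) ≤ x^s := div_le_self (by positivity) (by exact_mod_cast Nat.factorial_pos s)
      have h2 : x^(s+2*(n+1)) / x^2 = x^(s+2*n) := by
        rw [show s+2*(n+1) = (s+2*n)+2 by ring, pow_add x (s+2*n) 2]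
        have : x ≠ 0 := by linarith
        field_simp
      rw [h2]
      exact h1.trans (pow_le_pow_right₀ hx (by omega))
    have hss : s + 2 + 2 * n = s + 2 * (n+1) := by ring
    refine ⟨fun ε => κ ε * (ε - (n+1)), fun ε x => x^s / (Nat.factorial s : ℝ) * (κ ε * (ε - (n+1)))⁻¹ + 4 * p ε x, 6 * B + 4 * K, by positivity, hκ2, ⟨6*B, hBB⟩, ?_, ?_, ?_, ?_⟩
    · intro ε
      simp only [hκe, Finset.prod_range_succ]
    · intro ε hε x
      rw [hoPhi_rec, show -((n+1 : ℕ) : ℝ) + ε + 1 = -n + ε by push_cast; ring, hdec ε hε, show s+2+2*n+2 = s+2*(n+1)+2 by ring]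
      have := hκ2 ε hε
      push_cast
      have e : κ ε * (ε - (n+1)) * (x^s / (Nat.factorial s : ℝ) * (κ ε * (ε - (n+1)))⁻¹) = x^s / (Nat.factorial s : ℝ) := by
        rw [mul_comm (x^s / (Nat.factorial s : ℝ)), ← mul_assoc, mul_inv_cancel₀ this, one_mul]
      linear_combination -e
    · intro ε hε x hx
      have h1 := hb ε hε x hx
      rw [hss] at h1
      have h2 := (hBB ε hε ε hε).1
      have e : x^s / (Nat.factorial s : ℝ) * (κ ε * (ε - (n+1)))⁻¹ + 4 * p ε x - 4^(n+1) * x^(s+2*(n+1)) / (Nat.factorial (s+2*(n+1)) : ℝ) = 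
        x^s / (Nat.factorial s : ℝ) * (κ ε * (ε - (n+1)))⁻¹ + 4 * (p ε x - 4^n * x^(s+2*(n+1)) / (Nat.factorial (s+2*(n+1)) : ℝ)) := by ring
      rw [e]
      refine (abs_add_le _ _).trans ?_
      rw [abs_mul, abs_mul, abs_of_nonneg (by positivity : 0 ≤ x^s / (Nat.factorial s : ℝ)), abs_of_pos (by norm_num : (0:ℝ) < 4)]
      have h3 := hpow x hx
      calc _ ≤ (x^(s+2*(n+1)) / x^2) * (6 * B) + 4 * (K * (x^(s+2*(n+1)) / x^2)) := by gcongr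
        _ = _ := by ring
    · intro ε hε ε' hε' x hx
      have h1 := hl ε hε ε' hε' x hx
      rw [hss] at h1
      have h2 := (hBB ε hε ε' hε').2
      have e : x^s / (Nat.factorial s : ℝ) * (κ ε * (ε - (n+1)))⁻¹ + 4 * p ε x - (x^s / (Nat.factorial s : ℝ) * (κ ε' * (ε' - (n+1)))⁻¹ + 4 * p ε' x) = 
        x^s / (Nat.factorial s : ℝ) * ((κ ε * (ε - (n+1)))⁻¹ - (κ ε' * (ε' - (n+1)))⁻¹) + 4 * (p ε x - p ε' x) := by ring
      simp only
      rw [e]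
      refine (abs_add_le _ _).trans ?_
      rw [abs_mul, abs_mul, abs_of_nonneg (by positivity : 0 ≤ x^s / (Nat.factorial s : ℝ)), abs_of_pos (by norm_num : (0:ℝ) < 4)]
      have h3 : x^s / (Nat.factorial s : ℝ) ≤ x^(s+2*(n+1)) := (hpow x hx).trans (div_le_self (by positivity) (by nlinarith))
      calc _ ≤ x^(s+2*(n+1)) * (6 * B * |ε - ε'|) + 4 * (K * x^(s+2*(n+1)) * |ε - ε'|) := by gcongr
        _ = _ := by ring

lemma hoPhi_bounds (t : ℕ) : ∃ c C : ℝ, 0 < c ∧ 0 < C ∧ ∀ᶠ x in atTop,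
    c * (Real.exp (x^2) / x^t) ≤ hoPhi 1 (t+1) x ∧ hoPhi 1 (t+1) x ≤ C * (Real.exp (x^2) / x^t) := by
  obtain ⟨C, hC⟩ := hoPhi_asym t
  set A := Real.sqrt Real.pi / 2^(t+1) with hA
  have hA0 : 0 < A := by positivity
  refine ⟨A/2, A + |C|, by positivity, by positivity, ?_⟩
  filter_upwards [hC, eventually_ge_atTop 1, eventually_ge_atTop (2*|C|/A)] with x hx h1 h2
  have hx0 : 0 < x := by linarith
  rw [div_le_iff₀ hA0] at h2
  have e : Real.exp (x^2)/x^(t+2) = (Real.exp (x^2)/x^t) * (1/x^2) := by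
    rw [pow_add]; field_simp
  have hp : 0 < Real.exp (x^2)/x^t := by positivity
  have hx2 : 1/x^2 ≤ 1 := by
    rw [div_le_one (by positivity)]; nlinarith
  have hx3 : |C| * (1/x^2) ≤ A/2 := by
    rw [mul_one_div, div_le_iff₀ (by positivity)]; nlinarith [abs_nonneg C]
  have h3 : |C * (Real.exp (x^2)/x^(t+2))| ≤ A/2 * (Real.exp (x^2)/x^t) := by
    rw [e, abs_mul, abs_of_pos (by positivity : 0 < (Real.exp (x^2)/x^t) * (1/x^2))]
    calc _ = |C| * (1/x^2) * (Real.exp (x^2)/x^t) := by ring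
      _ ≤ _ := by gcongr
  have h4 : |C * (Real.exp (x^2)/x^(t+2))| ≤ |C| * (Real.exp (x^2)/x^t) := by
    rw [e, abs_mul, abs_of_pos (by positivity : 0 < (Real.exp (x^2)/x^t) * (1/x^2))]
    gcongr
    exact mul_le_of_le_one_right hp.le hx2
  have h5 := abs_le.1 (hx.trans (le_abs_self _))
  constructor <;> linarith

lemma ho_key (n s : ℕ) : ∃ C : ℝ, 0 < C ∧ ∀ᶠ x : ℝ in atTop, ∃ e : ℝ, 0 < e ∧ e < 1/4 ∧
    (∀ ε ∈ Icc (-1/2 : ℝ) (1/2), hoPhi (-n+ε) s x = 0 ↔ ε = -e) ∧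
    |e - 2^(s+2*n) / ((Nat.factorial (s+2*n) : ℝ) * Real.sqrt Real.pi) * (x^(2*(s+2*n)+1) / Real.exp (x^2))| ≤
      C * (1/x^2) * (2^(s+2*n) / ((Nat.factorial (s+2*n) : ℝ) * Real.sqrt Real.pi) * (x^(2*(s+2*n)+1) / Real.exp (x^2))) := by
  obtain ⟨κ, p, K, hK, hκ, -, -, hdec, hb, hl⟩ := ho_decomp n s
  generalize hm : s + 2*n = m at *
  obtain ⟨C1, hC1⟩ := hoPhi_asym (m+1)
  obtain ⟨c, _, hc, _, hcb⟩ := hoPhi_bounds (m+2)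
  obtain ⟨_, C2, _, hC2, hC2b⟩ := hoPhi_bounds m
  have hf : (0:ℝ) < (Nat.factorial m : ℝ) := by exact_mod_cast Nat.factorial_pos m
  have hpi : 0 < Real.sqrt Real.pi := Real.sqrt_pos.2 Real.pi_pos
  obtain ⟨w0, C', hw0, hC', hab⟩ := ho_abs (4^n / (Nat.factorial m : ℝ)) (4^(n+1) * (Real.sqrt Real.pi / 2^(m+2)))
    (K + 4^(n+1) * (|C1| + C2)) (4^(n+1) * c) (by positivity) (by positivity) (by positivity) (by positivity)
  refine ⟨C' / (2^m / ((Nat.factorial m : ℝ) * Real.sqrt Real.pi)), by positivity, ?_⟩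
  filter_upwards [hC1, hcb, hC2b, eventually_ge_atTop 1, eventually_gt_atTop (1/w0), ho_exp_grow 1 (2*m+1+8)] with x h1 h2 h3 hx1 hxw hg
  have hx0 : 0 < x := by linarith
  have hE := Real.exp_pos (x^2)
  set E := Real.exp (x^2) with hEdef
  have hw : 1/x^2 < w0 := by
    rw [div_lt_iff₀ hw0] at hxw
    rw [div_lt_iff₀ (by positivity)]
    nlinarith
  have hδ : x^(2*m+1)/E ≤ (1/x^2)^4 := by
    rw [div_le_iff₀ hE, div_pow, one_pow, div_mul_eq_mul_div, le_div_iff₀ (by positivity)]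
    calc _ = 1 * x^(2*m+1+8) := by ring
      _ ≤ _ := by linarith
  have hC20 : 0 ≤ 4^(n+1) * C2 := by positivity
  have hC10 : 0 ≤ 4^(n+1) * |C1| := by positivity
  have H := hab (1/x^2) (x^(2*m+1)/E) (by positivity) hw (by positivity) hδ
    (fun ε => p ε x / x^m) (fun ε => 4^(n+1) * hoPhi (1+ε) (m+2) x * (x^(m+1)/E)) 
  refine Exists.elim (H ?_ ?_ ?_ ?_ ?_) ?_
  · intro ε hε
    have h := hb ε hε x hx1
    have e1 : p ε x / x^m - 4^n / (Nat.factorial m : ℝ) = (p ε x - 4^n * x^m / (Nat.factorial m : ℝ)) / x^m := by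
      field_simp
    rw [e1, abs_div, abs_of_pos (by positivity : 0 < x^m), div_le_iff₀ (by positivity)]
    refine h.trans ?_
    calc K * (x^m/x^2) ≤ (K + 4^(n+1) * (|C1| + C2)) * (x^m/x^2) := by
          gcongr
          linarith
      _ = _ := by field_simp
  · intro ε hε ε' hε'
    have h := hl ε hε ε' hε' x hx1
    rw [← sub_div, abs_div, abs_of_pos (by positivity : 0 < x^m), div_le_iff₀ (by positivity)]
    refine h.trans ?_
    calc K * x^m * |ε - ε'| ≤ (K + 4^(n+1) * (|C1| + C2)) * x^m * |ε - ε'| := by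
          gcongr
          linarith
      _ = _ := by ring
  · simp only [add_zero]
    have e1 : 4^(n+1) * hoPhi 1 (m+2) x * (x^(m+1)/E) - 4^(n+1) * (Real.sqrt Real.pi / 2^(m+2)) =
      (4^(n+1) * (x^(m+1)/E)) * (hoPhi 1 (m+2) x - Real.sqrt Real.pi / 2^(m+2) * (E/x^(m+1))) := by
      field_simp
    rw [e1, abs_mul, abs_of_pos (by positivity : 0 < 4^(n+1) * (x^(m+1)/E))]
    calc _ ≤ (4^(n+1) * (x^(m+1)/E)) * (C1 * (E/x^(m+1+2))) := by gcongr
      _ ≤ (4^(n+1) * (x^(m+1)/E)) * (|C1| * (E/x^(m+1+2))) := by gcongr; exact le_abs_self _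
      _ = 4^(n+1) * |C1| * (1/x^2) := by field_simp; ring
      _ ≤ _ := by gcongr; linarith
  · intro ε hε
    have m1 : hoPhi (1/2) (m+2) x ≤ hoPhi (1+ε) (m+2) x := hoPhi_mono (by norm_num) (by linarith [hε.1]) hx0.le _
    have m2 := hoPhi_half hx0 (m+2)
    have m3 : c * (E/x^(m+2)) ≤ x * hoPhi (1+ε) (m+2) x := h2.1.trans (m2.trans (by gcongr))
    calc 4^(n+1) * c * (1/x^2) = 4^(n+1) * (c * (E/x^(m+2)) / x) * (x^(m+1)/E) := by field_simp; ring
      _ ≤ 4^(n+1) * (x * hoPhi (1+ε) (m+2) x / x) * (x^(m+1)/E) := by gcongr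
      _ = _ := by field_simp
  · intro ε₁ ε₂ he1 he12 he2
    have m1 : hoPhi (1+ε₁) (m+2) x ≤ hoPhi (1+ε₂) (m+2) x := hoPhi_mono (by linarith) (by linarith) hx0.le _
    have m2 := hoPhi_lip (a := 1+ε₁) (b := 1+ε₂) (by linarith) (by linarith) (by linarith) hx0 (m+1)
    have e1 : 4^(n+1) * hoPhi (1+ε₂) (m+2) x * (x^(m+1)/E) - 4^(n+1) * hoPhi (1+ε₁) (m+2) x * (x^(m+1)/E) =
      4^(n+1) * (x^(m+1)/E) * (hoPhi (1+ε₂) (m+2) x - hoPhi (1+ε₁) (m+2) x) := by ring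
    rw [e1]
    constructor
    · exact mul_nonneg (by positivity) (by linarith)
    · have hd : 0 ≤ ε₂ - ε₁ := by linarith
      calc _ ≤ 4^(n+1) * (x^(m+1)/E) * ((1+ε₂-(1+ε₁)) * (x * hoPhi 1 (m+1) x)) := by gcongr
        _ = 4^(n+1) * (x^(m+1)/E) * ((ε₂-ε₁) * (x * hoPhi 1 (m+1) x)) := by ring
        _ ≤ 4^(n+1) * (x^(m+1)/E) * ((ε₂-ε₁) * (x * (C2 * (E/x^m)))) := by gcongr; exact h3.2
        _ = (ε₂-ε₁) * (4^(n+1) * C2 / (1/x^2)) := by field_simp; ring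
        _ ≤ _ := by gcongr; linarith
  · rintro e ⟨he0, he1, hz, hest⟩
    refine ⟨e, he0, he1, ?_, ?_⟩
    · intro ε hε
      rw [← hz ε hε, hdec ε hε]
      have hfac : x^(2*m+1)/E * (p ε x / x^m) + ε * (4^(n+1) * hoPhi (1+ε) (m+2) x * (x^(m+1)/E)) =
          (x^(m+1)/E) * (p ε x + ε * 4^(n+1) * hoPhi (1+ε) (m+2) x) := by
        field_simp
        ring
      rw [hfac]
      have hne : x^(m+1)/E ≠ 0 := by positivity
      rw [mul_eq_zero, mul_eq_zero, or_iff_right hne, or_iff_right (hκ ε hε)]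
    · have e1 : x^(2*m+1)/E * (4^n / (Nat.factorial m : ℝ) / (4^(n+1) * (Real.sqrt Real.pi / 2^(m+2)))) =
        2^m / ((Nat.factorial m : ℝ) * Real.sqrt Real.pi) * (x^(2*m+1)/E) := by
        field_simp
        ring
      rw [e1] at hest
      refine hest.trans (le_of_eq ?_)
      field_simp

lemma hoPhi_neg (a : ℝ) (s : ℕ) (x : ℝ) : hoPhi a s (-x) = (-1)^s * hoPhi a s x := by
  unfold hoPhi
  rw [← tsum_mul_left]
  congr 1; ext k
  unfold hoTerm
  rw [neg_pow, pow_add (-1 : ℝ), pow_mul]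
  norm_num
  ring

lemma ho_ode (w w1 w2 : ℝ → ℝ) (κ h : ℝ) (hh : 0 < h) (h1 : ∀ x, HasDerivAt w (w1 x) x)
    (h2 : ∀ x, HasDerivAt w1 (w2 x) x) (h3 : ∀ x, w2 x = κ * w x + 2 * x * w1 x) :
    (∀ x, HasDerivAt (fun x => Real.exp (-x^2/(2*h)) * w (x / Real.sqrt h))
      (Real.exp (-x^2/(2*h)) * (-(x/h) * w (x / Real.sqrt h) + w1 (x / Real.sqrt h) / Real.sqrt h)) x) ∧
    (∀ x, HasDerivAt (fun x => Real.exp (-x^2/(2*h)) * (-(x/h) * w (x / Real.sqrt h) + w1 (x / Real.sqrt h) / Real.sqrt h))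
      ((x^2 - h * (1-κ))/h^2 * (Real.exp (-x^2/(2*h)) * w (x / Real.sqrt h))) x) := by
  have hs : 0 < Real.sqrt h := Real.sqrt_pos.2 hh
  have hs2 : Real.sqrt h ^ 2 = h := Real.sq_sqrt hh.le
  have he : ∀ x, HasDerivAt (fun x : ℝ => Real.exp (-x^2/(2*h))) (Real.exp (-x^2/(2*h)) * (-(x/h))) x := by
    intro x
    have := (((hasDerivAt_pow 2 x).neg).div_const (2*h)).exp
    refine this.congr_deriv ?_
    simp only [Pi.neg_apply]
    field_simp
    norm_num
    ring
  have hlin : ∀ x, HasDerivAt (fun x : ℝ => x / Real.sqrt h) (1 / Real.sqrt h) x :=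
    fun x => (hasDerivAt_id x).div_const _
  have hw : ∀ x, HasDerivAt (fun x => w (x / Real.sqrt h)) (w1 (x / Real.sqrt h) * (1 / Real.sqrt h)) x :=
    fun x => (h1 _).comp x (hlin x)
  have hw1 : ∀ x, HasDerivAt (fun x => w1 (x / Real.sqrt h)) (w2 (x / Real.sqrt h) * (1 / Real.sqrt h)) x :=
    fun x => (h2 _).comp x (hlin x)
  constructor
  · intro x
    refine ((he x).mul (hw x)).congr_deriv ?_
    ring
  · intro x
    have hx : HasDerivAt (fun x : ℝ => -(x/h)) (-(1/h)) x := ((hasDerivAt_id x).div_const h).neg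
    refine ((he x).mul ((hx.mul (hw x)).add ((hw1 x).div_const _))).congr_deriv ?_
    simp only [Pi.add_apply, Pi.mul_apply]
    rw [h3]
    generalize Real.exp (-x^2/(2*h)) = E
    generalize w (x / Real.sqrt h) = a
    generalize w1 (x / Real.sqrt h) = b
    generalize Real.sqrt h = t at *
    subst hs2
    field_simp
    ring

lemma ho_contDiff (u u1 c : ℝ → ℝ) (hc : Continuous c) (h1 : ∀ x, HasDerivAt u (u1 x) x)
    (h2 : ∀ x, HasDerivAt u1 (c x * u x) x) : ContDiff ℝ 2 u := by
  have e1 : deriv u = u1 := funext fun x => (h1 x).deriv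
  have e2 : deriv u1 = fun x => c x * u x := funext fun x => (h2 x).deriv
  have hu : Differentiable ℝ u := fun x => (h1 x).differentiableAt
  rw [show (2 : WithTop ℕ∞) = 1 + 1 by norm_num, contDiff_succ_iff_deriv]
  refine ⟨hu, by simp, ?_⟩
  rw [e1, contDiff_one_iff_deriv, e2]
  exact ⟨fun x => (h2 x).differentiableAt, hc.mul hu.continuous⟩

lemma ho_isEig_of (u u1 : ℝ → ℝ) (h R lam : ℝ) (hh : 0 < h) (h1 : ∀ x, HasDerivAt u (u1 x) x)
    (h2 : ∀ x, HasDerivAt u1 ((x^2 - lam)/h^2 * u x) x)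
    (hR : u R = 0) (hR' : u (-R) = 0) (hne : ∃ x ∈ Icc (-R) R, u x ≠ 0) :
    IsEigPD (fun x : ℝ => x ^ 2) (-R) R h lam := by
  refine ⟨u, hne, (ho_contDiff u u1 (fun x => (x^2-lam)/h^2) (by fun_prop) h1 h2).contDiffOn, hR', hR, ?_⟩
  intro x _
  have e1 : deriv u = u1 := funext fun x => (h1 x).deriv
  rw [e1, (h2 x).deriv]
  field_simp
  ring

lemma ho_wronsk (u u1 v v1 q : ℝ → ℝ) (R : ℝ)
    (h1 : ∀ x ∈ Ioo (-R) R, HasDerivAt u (u1 x) x) (h2 : ∀ x ∈ Ioo (-R) R, HasDerivAt u1 (q x * u x) x)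
    (k1 : ∀ x, HasDerivAt v (v1 x) x) (k2 : ∀ x, HasDerivAt v1 (q x * v x) x) :
    ∃ c, ∀ x ∈ Ioo (-R) R, u x * v1 x - u1 x * v x = c := by
  have hd : ∀ x ∈ Ioo (-R) R, HasDerivAt (fun x => u x * v1 x - u1 x * v x) 0 x := by
    intro x hx
    refine (((h1 x hx).mul (k2 x)).sub ((h2 x hx).mul (k1 x))).congr_deriv ?_
    ring
  obtain ⟨c, hc⟩ := isOpen_Ioo.exists_is_const_of_deriv_eq_zero (isPreconnected_Ioo)
    (fun x hx => (hd x hx).differentiableAt.differentiableWithinAt) (fun x hx => (hd x hx).deriv)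
  exact ⟨c, hc⟩

lemma ho_eig_iff (h R μ : ℝ) (hh : 0 < h) (hR : 0 < R) :
    IsEigPD (fun x : ℝ => x ^ 2) (-R) R h (h * μ) ↔
      hoPhi ((1-μ)/4) 0 (R / Real.sqrt h) = 0 ∨ hoPhi ((3-μ)/4) 1 (R / Real.sqrt h) = 0 := by
  have hs : 0 < Real.sqrt h := Real.sqrt_pos.2 hh
  set a := (1-μ)/4 with ha
  set b := (3-μ)/4 with hb
  have O0 := ho_ode (hoPhi a 0) (fun x => 4 * a * hoPhi (a+1) 1 x) (fun x => 4 * a * hoPhi (a+1) 0 x) (4*a) h hh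
    (hoPhi_zero_hasDerivAt a) (fun x => (hoPhi_hasDerivAt (a+1) 0 x).const_mul _) (hoPhi_id0 a)
  have O1 := ho_ode (hoPhi b 1) (hoPhi b 0) (fun x => 4 * b * hoPhi (b+1) 1 x) (4*b-2) h hh
    (hoPhi_hasDerivAt b 0) (hoPhi_zero_hasDerivAt b) (hoPhi_id1 b)
  rw [show 1 - 4*a = μ by rw [ha]; ring] at O0
  rw [show 1 - (4*b-2) = μ by rw [hb]; ring] at O1
  have ev0 : hoPhi a 0 0 = 1 := by rw [hoPhi_rec]; rw [hoPhi_at_zero]; simp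
  have ev1 : hoPhi b 0 0 = 1 := by rw [hoPhi_rec]; rw [hoPhi_at_zero]; simp
  have ev2 : hoPhi b 1 0 = 0 := hoPhi_at_zero b 0
  have par0 : ∀ x, hoPhi a 0 (-x) = hoPhi a 0 x := fun x => by simp [hoPhi_neg]
  have par1 : ∀ x, hoPhi b 1 (-x) = - hoPhi b 1 x := fun x => by simp [hoPhi_neg]
  set v0 : ℝ → ℝ := fun x => Real.exp (-x^2/(2*h)) * hoPhi a 0 (x / Real.sqrt h) with hv0
  set v1 : ℝ → ℝ := fun x => Real.exp (-x^2/(2*h)) * hoPhi b 1 (x / Real.sqrt h) with hv1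
  have z0 : v0 R = 0 ↔ hoPhi a 0 (R / Real.sqrt h) = 0 := by simp [hv0]
  have z1 : v1 R = 0 ↔ hoPhi b 1 (R / Real.sqrt h) = 0 := by simp [hv1]
  have m0 : v0 (-R) = v0 R := by simp only [hv0]; rw [neg_div (Real.sqrt h), par0, neg_sq]
  have m1 : v1 (-R) = - v1 R := by simp only [hv1]; rw [neg_div (Real.sqrt h), par1, neg_sq]; ring
  rw [← z0, ← z1]
  have h0mem : (0:ℝ) ∈ Ioo (-R) R := ⟨by linarith, hR⟩
  constructor
  · rintro ⟨u, ⟨x0, hx0, hux0⟩, hcd, hu1, hu2, hode⟩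
    have hopen := hcd.mono Ioo_subset_Icc_self
    have hd1 : ∀ x ∈ Ioo (-R) R, HasDerivAt u (deriv u x) x := fun x hx =>
      ((hopen.differentiableOn (by norm_num)).differentiableAt (isOpen_Ioo.mem_nhds hx)).hasDerivAt
    have hd2 : ∀ x ∈ Ioo (-R) R, HasDerivAt (deriv u) ((x^2 - h*μ)/h^2 * u x) x := by
      intro x hx
      have hc1 : ContDiffOn ℝ 1 (deriv u) (Ioo (-R) R) := hopen.deriv_of_isOpen isOpen_Ioo (by norm_num)
      have := ((hc1.differentiableOn (by norm_num)).differentiableAt (isOpen_Ioo.mem_nhds hx)).hasDerivAt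
      refine this.congr_deriv ?_
      have := hode x hx
      field_simp
      linear_combination -this
    obtain ⟨c0, hc0⟩ := ho_wronsk u (deriv u) v0 _ (fun x => (x^2 - h*μ)/h^2) R hd1 hd2 O0.1 O0.2
    obtain ⟨c1, hc1⟩ := ho_wronsk u (deriv u) v1 _ (fun x => (x^2 - h*μ)/h^2) R hd1 hd2 O1.1 O1.2
    obtain ⟨W, hW⟩ := ho_wronsk v0 _ v1 _ (fun x => (x^2 - h*μ)/h^2) R (fun x _ => O0.1 x) (fun x _ => O0.2 x) O1.1 O1.2
    have hWne : W ≠ 0 := by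
      rw [← hW 0 h0mem]
      simp [hv0, hv1, ev0, ev1, ev2, hs.ne']
    have heq : EqOn (fun x => u x * W) (fun x => c1 * v0 x - c0 * v1 x) (Ioo (-R) R) := by
      intro x hx
      simp only
      rw [← hW x hx, ← hc0 x hx, ← hc1 x hx]
      ring
    have hv0c : Continuous v0 := continuous_iff_continuousAt.2 fun x => (O0.1 x).continuousAt
    have hv1c : Continuous v1 := continuous_iff_continuousAt.2 fun x => (O1.1 x).continuousAt
    have heq2 : EqOn (fun x => u x * W) (fun x => c1 * v0 x - c0 * v1 x) (Icc (-R) R) := by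
      refine heq.of_subset_closure (hcd.continuousOn.mul continuousOn_const)
        (Continuous.continuousOn (by fun_prop)) Ioo_subset_Icc_self ?_
      rw [closure_Ioo (by linarith)]
    have r1 := heq2 (right_mem_Icc.2 (by linarith : -R ≤ R))
    have r2 := heq2 (left_mem_Icc.2 (by linarith : -R ≤ R))
    simp only [hu1, hu2, m0, m1] at r1 r2
    by_contra hcon
    push Not at hcon
    have hc1z : c1 = 0 := by
      have : c1 * v0 R = 0 := by linarith
      exact (mul_eq_zero.1 this).resolve_right hcon.1
    have hc0z : c0 = 0 := by
      have : c0 * v1 R = 0 := by linarith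
      exact (mul_eq_zero.1 this).resolve_right hcon.2
    have := heq2 hx0
    simp only [hc1z, hc0z, zero_mul, sub_zero] at this
    exact (mul_ne_zero hux0 hWne) this
  · rintro (hz | hz)
    · refine ho_isEig_of v0 _ h R (h*μ) hh O0.1 O0.2 hz (by rw [m0, hz]) ⟨0, ⟨by linarith, hR.le⟩, ?_⟩
      simp [hv0, ev0]
    · refine ho_isEig_of v1 _ h R (h*μ) hh O1.1 O1.2 hz (by rw [m1, hz, neg_zero]) ?_
      by_contra hcon
      push Not at hcon
      have hd := O1.1 0
      have hev : v1 =ᶠ[nhds 0] fun _ => 0 := by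
        filter_upwards [isOpen_Ioo.mem_nhds h0mem] with x hx
        exact hcon x (Ioo_subset_Icc_self hx)
      have hd2 : HasDerivAt v1 0 0 := (hasDerivAt_const (0:ℝ) (0:ℝ)).congr_of_eventuallyEq hev
      have := hd.unique hd2
      simp [ev1, ev2, hs.ne'] at this

/-- Counting lemma: identify the `m`-th element of a set whose low part is an explicit list. -/
lemma ho_count (S : Set ℝ) (m : ℕ) (lam B : ℝ) (f : ℕ → ℝ)
    (hf : ∀ i ≤ m, ∀ j ≤ m, i < j → f i < f j)
    (hfB : ∀ i ≤ m, f i < B)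
    (hfS : ∀ i ≤ m, f i ∈ S)
    (hS : ∀ x ∈ S, x ≤ B → ∃ j ≤ m, x = f j)
    (hn : IsNthEig S m lam) : lam = f m := by
  obtain ⟨h1, h2, h3⟩ := hn
  have hinj : ∀ k ≤ m + 1, Set.InjOn f (Finset.range k : Set ℕ) := by
    intro k hk i hi j hj hij
    simp only [Finset.coe_range, Set.mem_Iio] at hi hj
    rcases lt_trichotomy i j with h | h | h
    · exact absurd hij (hf i (by omega) j (by omega) h).ne
    · exact h
    · exact absurd hij.symm (hf j (by omega) i (by omega) h).ne
  have hcard : ∀ k ≤ m + 1, (f '' (Finset.range k : Set ℕ)).ncard = k := by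
    intro k hk
    rw [(hinj k hk).ncard_image, Set.ncard_coe_finset, Finset.card_range]
  by_cases hB : lam ≤ B
  · obtain ⟨j, hj, rfl⟩ := hS lam h1 hB
    have : {x ∈ S | x < f j} = f '' (Finset.range j : Set ℕ) := by
      ext x
      constructor
      · rintro ⟨hx, hxj⟩
        obtain ⟨i, hi, rfl⟩ := hS x hx (by linarith)
        refine ⟨i, ?_, rfl⟩
        simp only [Finset.coe_range, Set.mem_Iio]
        by_contra hc
        rcases (not_lt.1 hc).eq_or_lt with h | h
        · rw [h] at hxj; exact lt_irrefl _ hxj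
        · exact lt_asymm hxj (hf j hj i hi h)
      · rintro ⟨i, hi, rfl⟩
        simp only [Finset.coe_range, Set.mem_Iio] at hi
        exact ⟨hfS i (by omega), hf i (by omega) j hj hi⟩
    rw [this, hcard j (by omega)] at h3
    rw [h3]
  · exfalso
    have hsub : f '' (Finset.range (m+1) : Set ℕ) ⊆ {x ∈ S | x < lam} := by
      rintro _ ⟨i, hi, rfl⟩
      simp only [Finset.coe_range, Set.mem_Iio] at hi
      exact ⟨hfS i (by omega), by linarith [hfB i (by omega)]⟩
    have := Set.ncard_le_ncard hsub h2
    rw [hcard (m+1) le_rfl] at this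
    omega

/-- The rescaled asymptotic term. -/
lemma ho_term (m : ℕ) (h R : ℝ) (hh : 0 < h) (hR : 0 < R) :
    2 ^ (2 + m) / ((Nat.factorial m : ℝ) * Real.sqrt Real.pi) *
            h ^ ((1 : ℝ) / 2 - (m : ℝ)) * R ^ (2 * m + 1) * Real.exp (-R ^ 2 / h) =
    4 * h * (2^m/((Nat.factorial m:ℝ)*Real.sqrt Real.pi) *
      ((R / Real.sqrt h)^(2*m+1)/Real.exp ((R / Real.sqrt h)^2))) := by
  have hs : 0 < Real.sqrt h := Real.sqrt_pos.2 hh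
  have hs2 : Real.sqrt h ^ 2 = h := Real.sq_sqrt hh.le
  have e1 : h ^ ((1 : ℝ) / 2 - (m : ℝ)) = Real.sqrt h / h ^ m := by
    rw [Real.rpow_sub hh, Real.rpow_natCast, Real.sqrt_eq_rpow]
  have e2 : (R / Real.sqrt h)^2 = R^2/h := by rw [div_pow, hs2]
  have e3 : (R / Real.sqrt h)^(2*m+1) = R^(2*m+1) / (h^m * Real.sqrt h) := by
    rw [div_pow, pow_succ (Real.sqrt h), pow_mul (Real.sqrt h), hs2]
  rw [e1, e2, e3, neg_div, Real.exp_neg]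
  have hp : 0 < Real.sqrt Real.pi := Real.sqrt_pos.2 Real.pi_pos
  have hf : (0:ℝ) < Nat.factorial m := by exact_mod_cast Nat.factorial_pos m
  have hE := Real.exp_pos (R^2/h)
  generalize Real.exp (R^2/h) = E at *
  generalize Real.sqrt Real.pi = p at *
  generalize (Nat.factorial m : ℝ) = F at *
  have hhm : 0 < h^m := pow_pos hh m
  generalize hgm : h^m = H at *
  generalize R^(2*m+1) = Q at *
  rw [pow_add]
  generalize Real.sqrt h = t at *
  subst hs2
  field_simp
  ring


theorem confined_harmonic_oscillator
    (m : ℕ)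
    (lamΩ : ℝ → ℝ → ℝ)
    (hlamΩ : ∀ h R : ℝ, 0 < h → 0 < R →
      IsNthEig {lam | IsEigPD (fun x : ℝ => x ^ 2) (-R) R h lam} m (lamΩ h R)) :
    ∃ C δ : ℝ, 0 < C ∧ 0 < δ ∧ ∀ h R : ℝ, 0 < h → 0 < R → h / R ^ 2 < δ →
      |lamΩ h R - (2 * m + 1) * h -
          2 ^ (2 + m) / ((Nat.factorial m : ℝ) * Real.sqrt Real.pi) *
            h ^ ((1 : ℝ) / 2 - (m : ℝ)) * R ^ (2 * m + 1) * Real.exp (-R ^ 2 / h)| ≤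
        C * (h / R ^ 2) *
          (2 ^ (2 + m) / ((Nat.factorial m : ℝ) * Real.sqrt Real.pi) *
            h ^ ((1 : ℝ) / 2 - (m : ℝ)) * R ^ (2 * m + 1) * Real.exp (-R ^ 2 / h)) := by
  choose C hC hev using ho_key
  have hall : ∀ᶠ x : ℝ in atTop, ∀ n ∈ Finset.range (m+1), ∀ s ∈ Finset.range 2, _ :=
    (Filter.eventually_all_finset (Finset.range (m+1))).2 fun n _ =>
      (Filter.eventually_all_finset (Finset.range 2)).2 fun s _ => hev n s
  obtain ⟨X0, hX0⟩ := eventually_atTop.1 hall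
  set X := max X0 1 with hX
  have hX1 : 0 < X := lt_of_lt_of_le one_pos (le_max_right _ _)
  refine ⟨C (m/2) (m%2), 1/X^2, hC _ _, by positivity, ?_⟩
  intro h R hh hR hlt
  have hs : 0 < Real.sqrt h := Real.sqrt_pos.2 hh
  have hs2 : Real.sqrt h ^ 2 = h := Real.sq_sqrt hh.le
  rw [ho_term m h R hh hR]
  set L := R / Real.sqrt h with hL
  have hLpos : 0 < L := div_pos hR hs
  have hL2 : h / R^2 = 1 / L^2 := by rw [hL, div_pow, hs2]; field_simp
  rw [hL2] at hlt ⊢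
  have hXL : X ≤ L := by
    have : X^2 < L^2 := (one_div_lt_one_div (by positivity) (by positivity)).1 hlt
    exact (lt_of_pow_lt_pow_left₀ 2 hLpos.le this).le
  have hk := hX0 L (le_trans (le_max_left _ _) hXL)
  choose! e he0 he1 hez hest using hk
  have heig : ∀ μ : ℝ, IsEigPD (fun x : ℝ => x ^ 2) (-R) R h (h * μ) ↔
      ∃ s ∈ Finset.range 2, hoPhi ((2*(s:ℝ)+1-μ)/4) s L = 0 := by
    intro μ
    rw [ho_eig_iff h R μ hh hR, ← hL]
    constructor
    · rintro (hz | hz)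
      · exact ⟨0, by simp, by rw [← hz]; norm_num⟩
      · exact ⟨1, by simp, by rw [← hz]; norm_num⟩
    · rintro ⟨s, hs', hz⟩
      rw [Finset.mem_range] at hs'
      interval_cases s
      · left; rw [← hz]; norm_num
      · right; rw [← hz]; norm_num
  set f : ℕ → ℝ := fun j => h * (2*j+1+4*e (j/2) (j%2)) with hf
  have hdm : ∀ j : ℕ, (2 * ((j/2 : ℕ):ℝ) + ((j%2 : ℕ) : ℝ)) = j := by
    intro j; exact_mod_cast Nat.div_add_mod j 2
  have hm1 : ∀ j ≤ m, j/2 ∈ Finset.range (m+1) := fun j hj => by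
    rw [Finset.mem_range]; omega
  have hm2 : ∀ j : ℕ, j%2 ∈ Finset.range 2 := fun j => by
    rw [Finset.mem_range]; omega
  have hmain : lamΩ h R = f m := by
    refine ho_count _ m _ (h * (2*m+2)) f ?_ ?_ ?_ ?_ (hlamΩ h R hh hR)
    · intro i hi j hj hij
      refine mul_lt_mul_of_pos_left ?_ hh
      have a1 := he1 _ (hm1 i hi) _ (hm2 i)
      have a2 := he0 _ (hm1 j hj) _ (hm2 j)
      have : (i:ℝ) + 1 ≤ j := by exact_mod_cast hij
      linarith
    · intro i hi
      refine mul_lt_mul_of_pos_left ?_ hh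
      have a1 := he1 _ (hm1 i hi) _ (hm2 i)
      have : (i:ℝ) ≤ m := by exact_mod_cast hi
      linarith
    · intro j hj
      refine (heig _).2 ⟨j%2, hm2 j, ?_⟩
      have a1 := he1 _ (hm1 j hj) _ (hm2 j)
      have a2 := he0 _ (hm1 j hj) _ (hm2 j)
      have := (hez _ (hm1 j hj) _ (hm2 j) (-e (j/2) (j%2)) ⟨by linarith, by linarith⟩).2 rfl
      convert this using 2
      rw [← hdm j]
      ring_nf
    · intro x hx hxB
      obtain ⟨μ, rfl⟩ : ∃ μ, x = h * μ := ⟨x/h, by field_simp⟩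
      obtain ⟨s, hs', hz⟩ := (heig μ).1 hx
      have hμ : μ ≤ 2*m+2 := le_of_mul_le_mul_left hxB hh
      have ha : (2*(s:ℝ)+1-μ)/4 < 0 := by
        by_contra hc
        exact (hoPhi_pos (not_lt.1 hc) hLpos s).ne' hz
      set a := (2*(s:ℝ)+1-μ)/4 with hadef
      set n := ⌊-a+1/2⌋₊ with hn
      have f1 : (n:ℝ) ≤ -a+1/2 := Nat.floor_le (by linarith)
      have f2 : -a+1/2 < n+1 := Nat.lt_floor_add_one _
      have hs0 : (0:ℝ) ≤ s := Nat.cast_nonneg s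
      have hnm : n < m+1 := by
        have : (n:ℝ) < m+1 := by
          have : (0:ℝ) ≤ m := Nat.cast_nonneg m
          linarith
        exact_mod_cast this
      have hnm' := Finset.mem_range.2 hnm
      have key := (hez n hnm' s hs' (a+n) ⟨by linarith, by linarith⟩).1 (by
        rw [show -(n:ℝ) + (a+n) = a by ring]; exact hz)
      have a2 := he0 n hnm' s hs'
      have hs2' : s < 2 := Finset.mem_range.1 hs'
      have d1 : (2*n+s)/2 = n := by omega
      have d2 : (2*n+s)%2 = s := by omega
      refine ⟨2*n+s, ?_, ?_⟩
      · have : ((2*n+s : ℕ) : ℝ) < m + 1 := by push_cast; linarith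
        have : 2*n+s < m+1 := by exact_mod_cast this
        omega
      · simp only [hf, d1, d2]
        push_cast
        congr 1
        linarith
  rw [hmain]
  have est := hest _ (hm1 m le_rfl) _ (hm2 m)
  rw [show m%2 + 2*(m/2) = m by omega] at est
  generalize 2^m/((Nat.factorial m:ℝ)*Real.sqrt Real.pi) * (L^(2*m+1)/Real.exp (L^2)) = τ at *
  rw [show f m - (2*m+1)*h - 4*h*τ = 4*h*(e (m/2) (m%2) - τ) by simp only [hf]; ring, abs_mul,
    abs_of_pos (by positivity : 0 < 4*h)]
  calc 4*h*|e (m/2) (m%2) - τ| ≤ 4*h*(C (m/2) (m%2) * (1/L^2) * τ) :=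
        mul_le_mul_of_nonneg_left est (by positivity)
    _ = _ := by ring
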